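/- arXiv:1703.07505 — 3 statements merged into one kernel-verified Lean document; each statement's English description precedes it below -/
import Mathlib

section
/- Let R be a commutative ring, n a natural number, B = R[t]/(t^{n+1}), and M an R-module. Equip Hom_R(B, M) with the B-module structure (b • φ)(x) = φ(b·x), and equip M ⊗_R B with the B-module structure acting on the second factor. Then the map M ⊗_R B → Hom_R(B, M) sending m ⊗ b to the R-linear map x ↦ coeff_n(b·x) • m is an isomorphism of B-modules. -/
open Polynomial TensorProduct

/-!
On `B = R[t]/(t^{n+1})` the form `(b, x) ↦ coeff_n(b x)` is a perfect pairing: multiplication by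
`t^j` moves the coefficient of index `n - j` to index `n`, so pairing the class of `p` with
`1, t, …, t^n` reads off the coefficients of `p` in reverse order, and a functional `φ` is
represented by `∑_{i ≤ n} φ(t^{n-i}) t^i`. As `B` is finite free over `R`, this identifies
`M ⊗ B` with `B* ⊗ M = Hom_R(B, M)`. Any form `τ(b x)` satisfies `τ((c b) x) = τ(b (c x))`,
which is the `B`-linearity.
-/

section PerfectPairing

variable {R N N' : Type*} [CommRing R] [AddCommGroup N] [Module R N] [AddCommGroup N'] [Module R N']
  [Module.Finite R N'] [Module.Projective R N'] (M : Type*) [AddCommGroup M] [Module R M]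

/-- The isomorphism `M ⊗ N ≃ N'* ⊗ M ≃ Hom(N', M)` obtained by identifying `N` with the dual of the
finite projective module `N'` through a perfect pairing. -/
noncomputable def tensorEquivHomOfPerfPair (p : N →ₗ[R] N' →ₗ[R] R) [p.IsPerfPair] :
    M ⊗[R] N ≃ₗ[R] (N' →ₗ[R] M) :=
  TensorProduct.comm R M N ≪≫ₗ p.toPerfPair.rTensor M ≪≫ₗ dualTensorHomEquiv R N' M

variable {M}

@[simp]
lemma tensorEquivHomOfPerfPair_tmul_apply (p : N →ₗ[R] N' →ₗ[R] R) [p.IsPerfPair] (m : M) (b : N)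
    (x : N') : tensorEquivHomOfPerfPair M p (m ⊗ₜ b) x = p b x • m :=
  rfl

end PerfectPairing

section FrobeniusForm

variable {R A : Type*} [CommSemiring R] [CommSemiring A] [Algebra R A]

/-- The bilinear form `(a, b) ↦ τ (a * b)` attached to a functional `τ` on an algebra; a finite
projective algebra is Frobenius when some such form is a perfect pairing. -/
def frobeniusForm (τ : Module.Dual R A) : LinearMap.BilinForm R A :=
  (LinearMap.mul R A).compr₂ τ

@[simp]
lemma frobeniusForm_apply (τ : Module.Dual R A) (a b : A) : frobeniusForm τ a b = τ (a * b) :=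
  rfl

lemma frobeniusForm_mul_left (τ : Module.Dual R A) (c a b : A) :
    frobeniusForm τ (c * a) b = frobeniusForm τ a (c * b) := by
  simp only [frobeniusForm_apply, mul_assoc, mul_left_comm]

end FrobeniusForm

/-- The truncated polynomial ring `R[t]/(t^{n+1})`, with top degree `n`. -/
abbrev TruncatedPolynomial (R : Type*) [CommRing R] (n : ℕ) : Type _ :=
  R[X] ⧸ Ideal.span {(X : R[X]) ^ (n + 1)}

namespace TruncatedPolynomial

variable {R : Type*} [CommRing R] {n : ℕ}

instance : Module.Finite R (TruncatedPolynomial R n) :=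
  (monic_X_pow (n + 1)).finite_quotient

instance : Module.Free R (TruncatedPolynomial R n) :=
  (monic_X_pow (n + 1)).free_quotient

variable (R n) in
/-- The projection `R[t] → R[t]/(t^{n+1})`, as a homomorphism of `R`-algebras. -/
noncomputable abbrev mkₐ : R[X] →ₐ[R] TruncatedPolynomial R n :=
  Ideal.Quotient.mkₐ R _

lemma mkₐ_eq_zero_iff {p : R[X]} : mkₐ R n p = 0 ↔ ∀ i ≤ n, p.coeff i = 0 := by
  simp only [Ideal.Quotient.mkₐ_eq_mk, Ideal.Quotient.eq_zero_iff_mem, Ideal.mem_span_singleton,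
    X_pow_dvd_iff, Nat.lt_succ_iff]

lemma linearMap_ext {M : Type*} [AddCommMonoid M] [Module R M]
    {f g : TruncatedPolynomial R n →ₗ[R] M}
    (h : ∀ j ≤ n, f (mkₐ R n (X ^ j)) = g (mkₐ R n (X ^ j))) : f = g := by
  suffices f ∘ₗ (mkₐ R n).toLinearMap = g ∘ₗ (mkₐ R n).toLinearMap from
    (LinearMap.cancel_right (Ideal.Quotient.mkₐ_surjective R _)).mp this
  ext j
  simp only [LinearMap.comp_apply, monomial_one_right_eq_X_pow, AlgHom.toLinearMap_apply]
  obtain hj | hj := le_or_gt j n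
  · exact h j hj
  · have hX : mkₐ R n (X ^ j) = 0 :=
      mkₐ_eq_zero_iff.mpr fun i hi => by rw [coeff_X_pow, if_neg (by omega)]
    rw [hX, map_zero, map_zero]

variable (R n) in
/-- The functional `coeff_n` on `R[t]/(t^{n+1})`, reading off the coefficient of top degree. -/
noncomputable def topCoeff : Module.Dual R (TruncatedPolynomial R n) :=
  Submodule.liftQ ((Ideal.span {(X : R[X]) ^ (n + 1)}).restrictScalars R) (lcoeff R n)
    fun _ hp => mkₐ_eq_zero_iff.mp (Ideal.Quotient.eq_zero_iff_mem.mpr hp) n le_rfl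

@[simp]
lemma topCoeff_mkₐ (p : R[X]) : topCoeff R n (mkₐ R n p) = p.coeff n :=
  rfl

lemma frobeniusForm_topCoeff_mkₐ (p q : R[X]) :
    frobeniusForm (topCoeff R n) (mkₐ R n p) (mkₐ R n q) = (p * q).coeff n := by
  rw [frobeniusForm_apply, ← map_mul, topCoeff_mkₐ]

lemma frobeniusForm_topCoeff_mkₐ_X_pow (p : R[X]) {j : ℕ} (hj : j ≤ n) :
    frobeniusForm (topCoeff R n) (mkₐ R n p) (mkₐ R n (X ^ j)) = p.coeff (n - j) := by
  rw [frobeniusForm_topCoeff_mkₐ, coeff_mul_X_pow', if_pos hj]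

lemma frobeniusForm_topCoeff_injective :
    Function.Injective (frobeniusForm (topCoeff R n)) := by
  refine (injective_iff_map_eq_zero _).mpr fun b hb => ?_
  obtain ⟨p, rfl⟩ := Ideal.Quotient.mkₐ_surjective R _ b
  refine mkₐ_eq_zero_iff.mpr fun i hi => ?_
  calc p.coeff i = p.coeff (n - (n - i)) := by rw [Nat.sub_sub_self hi]
    _ = frobeniusForm (topCoeff R n) (mkₐ R n p) (mkₐ R n (X ^ (n - i))) :=
      (frobeniusForm_topCoeff_mkₐ_X_pow p (Nat.sub_le n i)).symm
    _ = 0 := by rw [hb, LinearMap.zero_apply]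

lemma frobeniusForm_topCoeff_surjective :
    Function.Surjective (frobeniusForm (topCoeff R n)) := by
  intro φ
  let p : R[X] := ∑ i ∈ Finset.range (n + 1), monomial i (φ (mkₐ R n (X ^ (n - i))))
  have coeff_p {i : ℕ} (hi : i ≤ n) : p.coeff i = φ (mkₐ R n (X ^ (n - i))) := by
    simp [p, coeff_monomial, hi]
  refine ⟨mkₐ R n p, linearMap_ext fun j hj => ?_⟩
  rw [frobeniusForm_topCoeff_mkₐ_X_pow p hj, coeff_p (Nat.sub_le n j), Nat.sub_sub_self hj]

instance isPerfPair_frobeniusForm_topCoeff : (frobeniusForm (topCoeff R n)).IsPerfPair :=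
  .of_bijective _ ⟨frobeniusForm_topCoeff_injective, frobeniusForm_topCoeff_surjective⟩

end TruncatedPolynomial

/-- For `B = R[t]/(t^{n+1})` and an `R`-module `M`, the map
`M ⊗_R B → Hom_R(B, M)` sending `m ⊗ b` to `x ↦ coeff_n(b·x) • m` is an isomorphism of
`B`-modules, where `B` acts on `Hom_R(B, M)` by precomposition and on `M ⊗_R B` through the
second factor.  `B`-linearity is expressed elementwise on pure tensors:
`e (m ⊗ (c * b)) x = e (m ⊗ b) (c * x)`. -/
theorem stmt2 (R M : Type*) [CommRing R] [AddCommGroup M] [Module R M] (n : ℕ) :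
    ∃ e : (M ⊗[R] (Polynomial R ⧸ Ideal.span {(X : Polynomial R) ^ (n + 1)})) ≃ₗ[R]
        ((Polynomial R ⧸ Ideal.span {(X : Polynomial R) ^ (n + 1)}) →ₗ[R] M),
      (∀ (m : M) (p q : Polynomial R),
        e (m ⊗ₜ[R] Ideal.Quotient.mk (Ideal.span {(X : Polynomial R) ^ (n + 1)}) p)
            (Ideal.Quotient.mk (Ideal.span {(X : Polynomial R) ^ (n + 1)}) q)
          = (p * q).coeff n • m) ∧
      (∀ (m : M) (c b x : Polynomial R ⧸ Ideal.span {(X : Polynomial R) ^ (n + 1)}),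
        e (m ⊗ₜ[R] (c * b)) x = e (m ⊗ₜ[R] b) (c * x)) := by
  refine ⟨tensorEquivHomOfPerfPair M (frobeniusForm (TruncatedPolynomial.topCoeff R n)),
    fun m p q => ?_, fun m c b x => ?_⟩
  · rw [tensorEquivHomOfPerfPair_tmul_apply]
    exact congrArg (· • m) (TruncatedPolynomial.frobeniusForm_topCoeff_mkₐ p q)
  · rw [tensorEquivHomOfPerfPair_tmul_apply, tensorEquivHomOfPerfPair_tmul_apply,
      frobeniusForm_mul_left]
end

section
/- For every commutative ring R and every R-algebra A, there exists an arc algebra of A over R; that is, there exist an R-algebra J and bijections θ_C : Hom_{R-alg}(J, C) → Hom_{R-alg}(A, C⟦t⟧), one for each commutative R-algebra C, which are natural in C. -/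
/-!
A function `f : A → C⟦t⟧` is the same thing as a family of coefficients, hence the same thing as an
`R`-algebra homomorphism `R[x_{a,n} : a ∈ A, n ∈ ℕ] → C`, under which `f` is the image of the
generic series `F a = ∑ x_{a,n} tⁿ`. Such an `f` is an `R`-algebra homomorphism exactly when the
homomorphism out of the polynomial ring identifies the coefficients of `F (a + b)` with those of
`F a + F b`, and likewise for products and for constants. Imposing these relations on the polynomial
ring therefore gives an algebra `J` for which `F` becomes a universal arc `A → J⟦t⟧`. The argument
only uses that power series are determined by their coefficients, so it applies to several variables
and to semirings.
-/

universe u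

/-- The `R`-algebra homomorphism `C⟦t⟧ → C'⟦t⟧` applying an `R`-algebra homomorphism
`g : C → C'` to coefficients. -/
noncomputable def psMap {R C C' : Type u} [CommRing R] [CommRing C] [CommRing C']
    [Algebra R C] [Algebra R C'] (g : C →ₐ[R] C') :
    PowerSeries C →ₐ[R] PowerSeries C' :=
  { PowerSeries.map (g : C →+* C') with
    commutes' := fun r => by
      simp [PowerSeries.algebraMap_apply, PowerSeries.map_C] }

/-- An arc algebra of `A` over `R`: an `R`-algebra `J` together with bijections
`θ_C : Hom_{R-alg}(J, C) ≃ Hom_{R-alg}(A, C⟦t⟧)`, natural in `C`. -/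
structure ArcAlgebra (R A : Type u) [CommRing R] [CommRing A] [Algebra R A] where
  carrier : Type u
  [commRing : CommRing carrier]
  [alg : Algebra R carrier]
  θ : ∀ (C : Type u) [CommRing C] [Algebra R C],
      (carrier →ₐ[R] C) ≃ (A →ₐ[R] PowerSeries C)
  naturality : ∀ (C C' : Type u) [CommRing C] [Algebra R C] [CommRing C'] [Algebra R C']
      (g : C →ₐ[R] C') (ψ : carrier →ₐ[R] C),
      θ C' (g.comp ψ) = (psMap g).comp (θ C ψ)

section

open MvPowerSeries

universe v w x

namespace MvArcAlgebra

lemma coeff_mapAlgHom {σ R B C : Type*} [CommSemiring R] [Semiring B] [Semiring C]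
    [Algebra R B] [Algebra R C] (g : B →ₐ[R] C) (s : MvPowerSeries σ B) (n : σ →₀ ℕ) :
    coeff n (mapAlgHom g s) = g (coeff n s) :=
  rfl

variable (σ : Type w) (R : Type u) {A : Type v} [CommSemiring R]

/-- The generic power series `∑ x_{a,n} tⁿ` attached to `a : A`, where `n` runs over the exponents
of monomials in the variables `σ`. -/
noncomputable def generic (a : A) : MvPowerSeries σ (MvPolynomial (A × (σ →₀ ℕ)) R) :=
  fun n => MvPolynomial.X (a, n)

variable {σ} {C : Type x} [CommSemiring C] [Algebra R C]

/-- The evaluation sending the variable `x_{a,n}` to the `n`-th coefficient of `f a`. -/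
noncomputable def evalCoeff (f : A → MvPowerSeries σ C) :
    MvPolynomial (A × (σ →₀ ℕ)) R →ₐ[R] C :=
  MvPolynomial.aeval fun p => coeff p.2 (f p.1)

lemma evalCoeff_X (f : A → MvPowerSeries σ C) (a : A) (n : σ →₀ ℕ) :
    evalCoeff R f (MvPolynomial.X (a, n)) = coeff n (f a) :=
  MvPolynomial.aeval_X _ _

lemma mapAlgHom_evalCoeff_generic (f : A → MvPowerSeries σ C) (a : A) :
    mapAlgHom (evalCoeff R f) (generic σ R a) = f a :=
  MvPowerSeries.ext fun n => evalCoeff_X R f a n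

variable (σ A) [Semiring A] [Algebra R A]

/-- The relations forcing `a ↦ generic σ R a` to become a homomorphism of `R`-algebras, imposed
coefficient by coefficient. Preservation of `0` and `1` is contained in `algebraMap`. -/
inductive Rel : MvPolynomial (A × (σ →₀ ℕ)) R → MvPolynomial (A × (σ →₀ ℕ)) R → Prop
  | add (a b : A) (n : σ →₀ ℕ) :
      Rel (coeff n (generic σ R (a + b))) (coeff n (generic σ R a + generic σ R b))
  | mul (a b : A) (n : σ →₀ ℕ) :
      Rel (coeff n (generic σ R (a * b))) (coeff n (generic σ R a * generic σ R b))
  | algebraMap (r : R) (n : σ →₀ ℕ) :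
      Rel (coeff n (generic σ R (algebraMap R A r))) (coeff n (algebraMap R _ r))

end MvArcAlgebra

/-- The algebra classifying arcs of `A` in several variables `σ`: homomorphisms from it to `C`
correspond to homomorphisms `A → C⟦σ⟧`, see `MvArcAlgebra.homEquiv`. -/
abbrev MvArcAlgebra (σ : Type w) (R : Type u) (A : Type v) [CommSemiring R] [Semiring A]
    [Algebra R A] : Type (max u v w) :=
  RingQuot (MvArcAlgebra.Rel σ R A)

namespace MvArcAlgebra

variable (σ : Type w) (R : Type u) (A : Type v) [CommSemiring R] [Semiring A] [Algebra R A]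

/-- The universal arc: the image of the generic power series in the arc algebra. -/
noncomputable def universalArc : A →ₐ[R] MvPowerSeries σ (MvArcAlgebra σ R A) :=
  let π := mapAlgHom (σ := σ) (RingQuot.mkAlgHom R (Rel σ R A))
  have generic_algebraMap (r : R) : π (generic σ R (algebraMap R A r)) = algebraMap R _ r := by
    rw [← π.commutes]
    exact MvPowerSeries.ext fun n => RingQuot.mkAlgHom_rel R (.algebraMap r n)
  { toFun a := π (generic σ R a)
    map_zero' := by simpa only [map_zero] using generic_algebraMap 0
    map_one' := by simpa only [map_one] using generic_algebraMap 1
    map_add' a b := by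
      rw [← map_add]
      exact MvPowerSeries.ext fun n => RingQuot.mkAlgHom_rel R (.add a b n)
    map_mul' a b := by
      rw [← map_mul]
      exact MvPowerSeries.ext fun n => RingQuot.mkAlgHom_rel R (.mul a b n)
    commutes' := generic_algebraMap }

variable {σ R A}

lemma coeff_universalArc (a : A) (n : σ →₀ ℕ) :
    coeff n (universalArc σ R A a) = RingQuot.mkAlgHom R (Rel σ R A) (MvPolynomial.X (a, n)) :=
  rfl

lemma algHom_ext {B : Type*} [Semiring B] [Algebra R B] {ψ ψ' : MvArcAlgebra σ R A →ₐ[R] B}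
    (h : ∀ a n, ψ (coeff n (universalArc σ R A a)) = ψ' (coeff n (universalArc σ R A a))) :
    ψ = ψ' :=
  RingQuot.ringQuot_ext' _ _ _ <| MvPolynomial.algHom_ext fun (a, n) => h a n

variable {C : Type x} [CommSemiring C] [Algebra R C]

lemma evalCoeff_eq_of_rel (f : A →ₐ[R] MvPowerSeries σ C)
    ⦃p q : MvPolynomial (A × (σ →₀ ℕ)) R⦄ (h : Rel σ R A p q) :
    evalCoeff R f p = evalCoeff R f q := by
  cases h <;>
    simp only [← coeff_mapAlgHom, map_add, map_mul, AlgHom.commutes, mapAlgHom_evalCoeff_generic]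

/-- The homomorphism out of the arc algebra classifying the arc `f`. -/
noncomputable def lift (f : A →ₐ[R] MvPowerSeries σ C) : MvArcAlgebra σ R A →ₐ[R] C :=
  RingQuot.liftAlgHom R ⟨evalCoeff R f, evalCoeff_eq_of_rel f⟩

lemma lift_coeff_universalArc (f : A →ₐ[R] MvPowerSeries σ C) (a : A) (n : σ →₀ ℕ) :
    lift f (coeff n (universalArc σ R A a)) = coeff n (f a) := by
  rw [coeff_universalArc, lift, RingQuot.liftAlgHom_mkAlgHom_apply, evalCoeff_X]

lemma mapAlgHom_lift_comp_universalArc (f : A →ₐ[R] MvPowerSeries σ C) :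
    (mapAlgHom (lift f)).comp (universalArc σ R A) = f := by
  ext a n
  rw [AlgHom.comp_apply, coeff_mapAlgHom, lift_coeff_universalArc]

lemma lift_mapAlgHom_comp_universalArc (ψ : MvArcAlgebra σ R A →ₐ[R] C) :
    lift ((mapAlgHom ψ).comp (universalArc σ R A)) = ψ := by
  refine algHom_ext fun a n => ?_
  rw [lift_coeff_universalArc, AlgHom.comp_apply, coeff_mapAlgHom]

variable (σ R A C) in
/-- The universal property of the arc algebra: `ψ` corresponds to the universal arc with `ψ` applied
to its coefficients. -/
noncomputable def homEquiv :
    (MvArcAlgebra σ R A →ₐ[R] C) ≃ (A →ₐ[R] MvPowerSeries σ C) where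
  toFun ψ := (mapAlgHom ψ).comp (universalArc σ R A)
  invFun := lift
  left_inv := lift_mapAlgHom_comp_universalArc
  right_inv := mapAlgHom_lift_comp_universalArc

lemma homEquiv_comp {C' : Type*} [CommSemiring C'] [Algebra R C'] (g : C →ₐ[R] C')
    (ψ : MvArcAlgebra σ R A →ₐ[R] C) :
    homEquiv σ R A C' (g.comp ψ) = (mapAlgHom g).comp (homEquiv σ R A C ψ) :=
  rfl

end MvArcAlgebra

theorem stmt6_general (σ : Type w) (R : Type u) (A : Type v) [CommSemiring R] [Semiring A]
    [Algebra R A] :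
    ∃ (J : Type (max u v w)) (_ : CommSemiring J) (_ : Algebra R J)
      (θ : ∀ (C : Type x) [CommSemiring C] [Algebra R C],
        (J →ₐ[R] C) ≃ (A →ₐ[R] MvPowerSeries σ C)),
      ∀ (C C' : Type x) [CommSemiring C] [Algebra R C] [CommSemiring C'] [Algebra R C']
        (g : C →ₐ[R] C') (ψ : J →ₐ[R] C), θ C' (g.comp ψ) = (mapAlgHom g).comp (θ C ψ) :=
  ⟨MvArcAlgebra σ R A, inferInstance, inferInstance, fun C => MvArcAlgebra.homEquiv σ R A C,
    fun _ _ => MvArcAlgebra.homEquiv_comp⟩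

end

/-- for every commutative ring `R` and every `R`-algebra `A`, an arc algebra of
`A` over `R` exists. -/
theorem stmt6 (R A : Type u) [CommRing R] [CommRing A] [Algebra R A] :
    Nonempty (ArcAlgebra R A) := by
  obtain ⟨J, _, _, θ, hθ⟩ := stmt6_general Unit R A
  exact ⟨{ carrier := J, commRing := (algebraMap R J).commSemiringToCommRing,
           θ := fun C => θ C, naturality := fun C C' => hθ C C' }⟩
end

section
/- Let R be a commutative local ring with maximal ideal m and residue field k = R/m. Then the m-adic completion of R (the inverse limit of the rings R/m^n) is a Noetherian ring if and only if the k-vector space m/m² is finite-dimensional, i.e. if and only if R has finite embedding dimension. -/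
/-!
Let `R̂` be the `I`-adic completion of `R`, filtered by the kernels of `R̂ → R ⧸ I ^ n`. If
`I ⧸ I ^ 2` is finitely generated, lift generators of it to `I` and let `J` be the ideal of `R̂`
they generate. Successive approximation shows that the `n`-th kernel is `J ^ n`, so `R̂` is
`J`-adically complete with `R̂ ⧸ J = R ⧸ I`.

A ring `A` that is complete for a finitely generated ideal `J` with `A ⧸ J` Noetherian is itself
Noetherian: otherwise choose an ideal `P` maximal among those not finitely generated. It is prime
and misses some `x ∈ J`. As `P + (x)` is finitely generated, `P = K + x P` for a finitely generated
`K ≤ P`, and iterating this equation gives `P = K` by completeness, a contradiction.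

Conversely, `I ⧸ I ^ 2` is the image in `R ⧸ I ^ 2` of the kernel of `R̂ → R ⧸ I`.
-/

open AdicCompletion (evalₐ evalOneₐ evalOneₐ_surjective factor_eval_eq_evalₐ surjective_evalₐ)

section FiniteGeneration

variable {A : Type*} [CommRing A]

theorem exists_fg_le_sup_of_fg_map_mk {P L : Ideal A} (h : (P.map (Ideal.Quotient.mk L)).FG) :
    ∃ K ≤ P, K.FG ∧ P ≤ K ⊔ L := by
  classical
  obtain ⟨t, ht, hspan⟩ := (Submodule.fg_span_iff_fg_span_finset_subset _).mp h
  obtain ⟨s, hs, rfl⟩ := Finset.subset_set_image_iff.mp ht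
  refine ⟨Ideal.span s, Ideal.span_le.mpr hs, ⟨s, rfl⟩, ?_⟩
  have hmap : P.map (Ideal.Quotient.mk L) = (Ideal.span s).map (Ideal.Quotient.mk L) := by
    rw [Ideal.map_span, ← Finset.coe_image]
    exact hspan
  calc P ≤ ((Ideal.span s).map (Ideal.Quotient.mk L)).comap (Ideal.Quotient.mk L) :=
        Ideal.map_le_iff_le_comap.mp hmap.le
    _ = Ideal.span s ⊔ L := by rw [Ideal.comap_map_quotientMk, sup_comm]

theorem fg_of_le_of_isNoetherianRing_quotient {I P : Ideal A} (hI : I.FG) [IsNoetherianRing (A ⧸ I)]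
    (hIP : I ≤ P) : P.FG := by
  obtain ⟨K, hKP, hK, hPK⟩ := exists_fg_le_sup_of_fg_map_mk
    (IsNoetherian.noetherian (P.map (Ideal.Quotient.mk I)))
  rw [hPK.antisymm (sup_le hKP hIP)]
  exact Submodule.FG.sup hK hI

theorem exists_fg_le_sup_span_singleton_mul {P : Ideal A} [hP : P.IsPrime] {x : A} (hx : x ∉ P)
    (h : (P ⊔ Ideal.span {x}).FG) : ∃ K ≤ P, K.FG ∧ P ≤ K ⊔ Ideal.span {x} * P := by
  have hmap : (P ⊔ Ideal.span {x}).map (Ideal.Quotient.mk (Ideal.span {x})) =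
      P.map (Ideal.Quotient.mk (Ideal.span {x})) := by
    rw [Ideal.map_sup, Ideal.map_quotient_self, sup_bot_eq]
  obtain ⟨K, hKP, hK, hPK⟩ := exists_fg_le_sup_of_fg_map_mk (hmap ▸ h.map _)
  refine ⟨K, hKP, hK, fun p hp => ?_⟩
  obtain ⟨c, hc, z, hz, rfl⟩ := Submodule.mem_sup.mp (hPK hp)
  obtain ⟨a, rfl⟩ := Ideal.mem_span_singleton'.mp hz
  have hax : a * x ∈ P := (P.add_mem_iff_right (hKP hc)).mp hp
  have ha : a ∈ P := (hP.mem_or_mem hax).resolve_right hx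
  exact Submodule.add_mem_sup hc <|
    mul_comm x a ▸ Ideal.mul_mem_mul (Ideal.mem_span_singleton_self x) ha

theorem exists_maximal_not_fg {J : Ideal A} (hJ : ¬ J.FG) :
    ∃ P : Ideal A, Maximal (fun K : Ideal A => ¬ K.FG) P := by
  have hsSup (C : Set (Ideal A)) (hC : C ⊆ {K | ¬ K.FG}) (hchain : IsChain (· ≤ ·) C)
      (K : Ideal A) (hK : K ∈ C) : ¬ (sSup C).FG := fun hfg => by
    obtain ⟨M, hM, hle⟩ := (CompleteLattice.isCompactElement_iff_le_of_directed_sSup_le _ _).mp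
      ((Submodule.fg_iff_compact _).mp hfg) C ⟨K, hK⟩ hchain.directedOn le_rfl
    exact hC hM (hle.antisymm (le_sSup hM) ▸ hfg)
  obtain ⟨P, -, hP⟩ := zorn_le_nonempty₀ {K : Ideal A | ¬ K.FG}
    (fun C hC hc K hK => ⟨sSup C, hsSup C hC hc K hK, fun _ => le_sSup⟩) J hJ
  exact ⟨P, hP⟩

theorem finite_cotangent_iff_fg_cotangentIdeal {I : Ideal A} :
    Module.Finite (A ⧸ I) I.Cotangent ↔ I.cotangentIdeal.FG := by
  refine Iff.trans (b := Module.Finite (A ⧸ I ^ 2) I.cotangentIdeal)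
    ⟨fun _ => ?_, fun _ => ?_⟩ Module.Finite.iff_fg
  · have : Module.Finite A I.Cotangent := Module.Finite.trans (A ⧸ I) _
    have : Module.Finite A I.cotangentIdeal := Module.Finite.equiv I.cotangentEquivIdeal
    exact Module.Finite.of_restrictScalars_finite A _ _
  · have : Module.Finite A I.cotangentIdeal := Module.Finite.trans (A ⧸ I ^ 2) _
    have : Module.Finite A I.Cotangent := Module.Finite.equiv I.cotangentEquivIdeal.symm
    exact Module.Finite.of_restrictScalars_finite A _ _

theorem pow_le_sup_pow_succ {I J : Ideal A} (hJI : J ≤ I) (hIJ : I ≤ J ⊔ I ^ 2) (n : ℕ) :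
    I ^ n ≤ J ^ n ⊔ I ^ (n + 1) := by
  induction n with
  | zero => simp
  | succ n ih =>
    have hJn : J ^ n * I ≤ J ^ (n + 1) ⊔ I ^ (n + 2) :=
      calc J ^ n * I ≤ J ^ n * (J ⊔ I ^ 2) := Ideal.mul_mono_right hIJ
        _ = J ^ (n + 1) ⊔ J ^ n * I ^ 2 := by rw [Ideal.mul_sup, pow_succ J n]
        _ ≤ J ^ (n + 1) ⊔ I ^ n * I ^ 2 :=
          sup_le_sup_left (Ideal.mul_mono_left (Ideal.pow_right_mono hJI n)) _
        _ = J ^ (n + 1) ⊔ I ^ (n + 2) := by rw [← pow_add]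
    calc I ^ (n + 1) = I ^ n * I := pow_succ I n
      _ ≤ (J ^ n ⊔ I ^ (n + 1)) * I := Ideal.mul_mono_left ih
      _ = J ^ n * I ⊔ I ^ (n + 2) := by rw [Ideal.sup_mul, ← pow_succ]
      _ ≤ J ^ (n + 1) ⊔ I ^ (n + 2) := sup_le hJn le_sup_right

end FiniteGeneration

section CompleteFiltration

variable {A : Type*} [CommRing A]

/-- A decreasing filtration of a ring by ideals that defines a separated and complete topology.
Completeness is required only for Cauchy sequences with the modulus `f n - f m ∈ F m`, as in the
definition of `IsPrecomplete`. -/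
structure IsCompleteFiltration (F : ℕ → Ideal A) : Prop where
  antitone : Antitone F
  eq_zero_of_forall_mem : ∀ x, (∀ n, x ∈ F n) → x = 0
  exists_limit : ∀ f : ℕ → A, (∀ ⦃m n⦄, m ≤ n → f n - f m ∈ F m) → ∃ a, ∀ n, a - f n ∈ F n

theorem isAdicComplete_iff_isCompleteFiltration {I : Ideal A} :
    IsAdicComplete I A ↔ IsCompleteFiltration fun n => I ^ n := by
  have hmod (n : ℕ) (x y : A) : x ≡ y [SMOD (I ^ n • ⊤ : Ideal A)] ↔ y - x ∈ I ^ n := by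
    rw [SModEq.comm, SModEq.sub_mem, smul_eq_mul, Ideal.mul_top]
  constructor
  · intro h
    refine ⟨fun _ _ => Ideal.pow_le_pow_right, fun x hx => ?_, fun f hf => ?_⟩
    · exact h.haus x fun n => ((hmod n 0 x).mpr (by simpa using hx n)).symm
    · obtain ⟨a, ha⟩ := h.prec fun hmn => (hmod _ _ _).mpr (hf hmn)
      exact ⟨a, fun n => (hmod _ _ _).mp (ha n)⟩
  · intro h
    refine { haus' := fun x hx => ?_, prec' := fun f hf => ?_ }
    · exact h.eq_zero_of_forall_mem x fun n => by simpa using (hmod n 0 x).mp (hx n).symm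
    · obtain ⟨a, ha⟩ := h.exists_limit f fun m n hmn => (hmod _ _ _).mp (hf hmn)
      exact ⟨a, fun n => (hmod _ _ _).mpr (ha n)⟩

namespace IsCompleteFiltration

variable {F : ℕ → Ideal A}

theorem exists_limit_of_succ (hF : IsCompleteFiltration F) (f : ℕ → A)
    (hf : ∀ n, f (n + 1) - f n ∈ F n) : ∃ a, ∀ n, a - f n ∈ F n := by
  refine hF.exists_limit f fun m n hmn => ?_
  induction n, hmn using Nat.le_induction with
  | base => simp
  | succ n hmn ih => simpa using add_mem (hF.antitone hmn (hf n)) ih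

theorem le_of_le_mul_sup_succ (hF : IsCompleteFiltration F) {G : ℕ → Ideal A} {I : Ideal A}
    (hI : I.FG) (hGF : ∀ n, G n ≤ F n) (hG : ∀ n, G n ≤ F n * I ⊔ G (n + 1)) : G 0 ≤ I := by
  obtain ⟨k, b, rfl⟩ := Submodule.fg_iff_exists_fin_generating_family.mp hI
  intro y hy
  have improve (n : ℕ) (t : Fin k → A) (ht : y - t ⬝ᵥ b ∈ G n) :
      ∃ t' : Fin k → A, (∀ i, t' i - t i ∈ F n) ∧ y - t' ⬝ᵥ b ∈ G (n + 1) := by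
    obtain ⟨u, hu, z, hz, huz⟩ := Submodule.mem_sup.mp (hG n ht)
    obtain ⟨c, hc, rfl⟩ := (Submodule.mem_ideal_smul_span_iff_exists_sum _ _ _).mp hu
    refine ⟨t + c, fun i => by simpa using hc i, ?_⟩
    have hsum : (c.sum fun i a => a • b i) = c ⬝ᵥ b := Finsupp.sum_fintype _ _ (by simp)
    rwa [add_dotProduct, ← sub_sub, ← huz, hsum, add_sub_cancel_left]
  choose! next hnext_sub hnext_mem using improve
  let s : ℕ → Fin k → A := Nat.rec 0 next
  have hs (n : ℕ) : y - s n ⬝ᵥ b ∈ G n := by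
    induction n with
    | zero => simpa [s] using hy
    | succ n ih => exact hnext_mem n _ ih
  choose a ha using fun i => hF.exists_limit_of_succ (s · i) fun n => hnext_sub n _ (hs n) i
  have hya : y - a ⬝ᵥ b = 0 := by
    refine hF.eq_zero_of_forall_mem _ fun n => ?_
    have hdiff : (a - s n) ⬝ᵥ b ∈ F n := sum_mem fun i _ => (F n).mul_mem_right _ (ha i n)
    simpa [sub_dotProduct] using sub_mem (hGF n (hs n)) hdiff
  rw [sub_eq_zero.mp hya]
  exact sum_mem fun i _ => Ideal.mul_mem_left _ _ (Submodule.subset_span ⟨i, rfl⟩)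

theorem eq_pow (hF : IsCompleteFiltration F) {J : Ideal A} (hJ : J.FG) (hJF : ∀ n, J ^ n ≤ F n)
    (hFJ : ∀ n, F n ≤ J ^ n ⊔ F (n + 1)) (n : ℕ) : F n = J ^ n := by
  refine le_antisymm ?_ (hJF n)
  refine hF.le_of_le_mul_sup_succ (G := fun k => F (n + k)) hJ.pow
    (fun k => hF.antitone (Nat.le_add_left k n)) fun k => ?_
  calc F (n + k) ≤ J ^ (n + k) ⊔ F (n + k + 1) := hFJ (n + k)
    _ = J ^ k * J ^ n ⊔ F (n + k + 1) := by rw [add_comm n k, pow_add]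
    _ ≤ F k * J ^ n ⊔ F (n + k + 1) := sup_le_sup_right (Ideal.mul_mono_left (hJF k)) _

end IsCompleteFiltration

theorem isNoetherianRing_of_isAdicComplete {I : Ideal A} (hI : I.FG)
    [IsAdicComplete I A] [IsNoetherianRing (A ⧸ I)] : IsNoetherianRing A := by
  rw [isNoetherianRing_iff_ideal_fg]
  by_contra! ⟨J, hJ⟩
  obtain ⟨P, hP⟩ := exists_maximal_not_fg hJ
  have hprime : P.IsPrime := Ideal.isOka_fg.isPrime_of_maximal_not hP
  obtain ⟨x, hxI, hxP⟩ : ∃ x ∈ I, x ∉ P :=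
    SetLike.not_le_iff_exists.mp fun hIP => hP.prop (fg_of_le_of_isNoetherianRing_quotient hI hIP)
  have hsup : (P ⊔ Ideal.span {x}).FG :=
    of_not_not (hP.not_prop_of_gt (Submodule.lt_sup_iff_notMem.mpr hxP))
  obtain ⟨K, hKP, hK, hPK⟩ := exists_fg_le_sup_span_singleton_mul hxP hsup
  have hpow (n : ℕ) : Ideal.span {x} ^ n ≤ I ^ n :=
    Ideal.pow_right_mono ((Ideal.span_singleton_le_iff_mem I).mpr hxI) n
  have hPK' : Ideal.span {x} ^ 0 * P ≤ K :=
    (isAdicComplete_iff_isCompleteFiltration.mp ‹_›).le_of_le_mul_sup_succ hK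
      (G := fun n => Ideal.span {x} ^ n * P) (fun n => Ideal.mul_le_left.trans (hpow n)) fun n =>
      calc Ideal.span {x} ^ n * P ≤ Ideal.span {x} ^ n * (K ⊔ Ideal.span {x} * P) :=
            Ideal.mul_mono_right hPK
        _ = Ideal.span {x} ^ n * K ⊔ Ideal.span {x} ^ (n + 1) * P := by
            rw [Ideal.mul_sup, ← mul_assoc, ← pow_succ]
        _ ≤ I ^ n * K ⊔ Ideal.span {x} ^ (n + 1) * P :=
            sup_le_sup_right (Ideal.mul_mono_left (hpow n)) _
  rw [pow_zero, Ideal.one_eq_top, Ideal.top_mul] at hPK'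
  exact hP.prop (hPK'.antisymm hKP ▸ hK)

end CompleteFiltration

section AdicCompletion

variable {R : Type*} [CommRing R] {I : Ideal R}

theorem mem_ker_evalₐ_iff {n : ℕ} {x : AdicCompletion I R} :
    x ∈ RingHom.ker (evalₐ I n) ↔ x.val n = 0 := by
  have h : (I ^ n • ⊤ : Ideal R) = I ^ n := Ideal.mul_top _
  rw [RingHom.mem_ker, ← factor_eval_eq_evalₐ I x h.le]
  exact map_eq_zero_iff _ (Ideal.quotEquivOfEq h).injective

theorem algebraMap_mem_ker_evalₐ_iff {n : ℕ} {r : R} :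
    algebraMap R (AdicCompletion I R) r ∈ RingHom.ker (evalₐ I n) ↔ r ∈ I ^ n := by
  rw [RingHom.mem_ker, AlgHom.commutes]
  exact Ideal.Quotient.eq_zero_iff_mem

variable (I)

theorem antitone_ker_evalₐ : Antitone fun n => RingHom.ker (evalₐ I n) := by
  intro m n hmn x hx
  rw [mem_ker_evalₐ_iff] at hx ⊢
  rw [← x.2 hmn, hx, map_zero]

theorem isCompleteFiltration_ker_evalₐ :
    IsCompleteFiltration fun n => RingHom.ker (evalₐ I n) where
  antitone := antitone_ker_evalₐ I
  eq_zero_of_forall_mem x hx := AdicCompletion.ext fun n => mem_ker_evalₐ_iff.mp (hx n)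
  exists_limit f hf := by
    refine ⟨⟨fun n => (f n).val n, fun {m n} hmn => ?_⟩, fun n => ?_⟩
    · rw [(f n).2 hmn]
      exact sub_eq_zero.mp (mem_ker_evalₐ_iff.mp (hf hmn))
    · exact mem_ker_evalₐ_iff.mpr (sub_self _)

theorem map_pow_le_ker_evalₐ (n : ℕ) :
    (I ^ n).map (algebraMap R (AdicCompletion I R)) ≤ RingHom.ker (evalₐ I n) :=
  Ideal.map_le_iff_le_comap.mpr fun _ hr => algebraMap_mem_ker_evalₐ_iff.mpr hr

theorem ker_evalₐ_eq_map_sup {k n : ℕ} (hkn : k ≤ n) :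
    RingHom.ker (evalₐ I k) =
      (I ^ k).map (algebraMap R (AdicCompletion I R)) ⊔ RingHom.ker (evalₐ I n) := by
  have hle := antitone_ker_evalₐ I hkn
  refine le_antisymm (fun x hx => ?_) (sup_le (map_pow_le_ker_evalₐ I k) hle)
  obtain ⟨r, hr⟩ := Ideal.Quotient.mk_surjective (evalₐ I n x)
  have hxr : x - algebraMap R _ r ∈ RingHom.ker (evalₐ I n) := by
    rw [RingHom.mem_ker, map_sub, AlgHom.commutes, ← hr]
    exact sub_self _
  have hrI : r ∈ I ^ k :=
    algebraMap_mem_ker_evalₐ_iff.mp (by simpa only [sub_sub_cancel] using sub_mem hx (hle hxr))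
  rw [← add_sub_cancel (algebraMap R _ r) x]
  exact Submodule.add_mem_sup (Ideal.mem_map_of_mem _ hrI) hxr

theorem map_evalₐ_ker_evalₐ_one :
    (RingHom.ker (evalₐ I 1)).map (evalₐ I 2 : AdicCompletion I R →+* R ⧸ I ^ 2) =
      I.cotangentIdeal := by
  have hbot : (RingHom.ker (evalₐ I 2)).map (evalₐ I 2 : AdicCompletion I R →+* R ⧸ I ^ 2) = ⊥ :=
    (Ideal.map_eq_bot_iff_le_ker _).mpr le_rfl
  rw [ker_evalₐ_eq_map_sup I one_le_two, Ideal.map_sup, hbot, sup_bot_eq, pow_one, Ideal.map_map,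
    AlgHom.comp_algebraMap]
  exact Ideal.map_eq_submodule_map (Ideal.Quotient.mk (I ^ 2)) I

theorem fg_cotangentIdeal_of_isNoetherianRing_adicCompletion
    [IsNoetherianRing (AdicCompletion I R)] : I.cotangentIdeal.FG :=
  map_evalₐ_ker_evalₐ_one I ▸ Ideal.FG.map (IsNoetherian.noetherian _) _

theorem exists_fg_ker_evalₐ_eq_pow (h : I.cotangentIdeal.FG) :
    ∃ J : Ideal (AdicCompletion I R), J.FG ∧ ∀ n, RingHom.ker (evalₐ I n) = J ^ n := by
  obtain ⟨J, hJI, hJ, hIJ⟩ := exists_fg_le_sup_of_fg_map_mk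
    (show (I.map (Ideal.Quotient.mk (I ^ 2))).FG by rwa [Ideal.map_eq_submodule_map])
  refine ⟨J.map (algebraMap R _), hJ.map _,
    (isCompleteFiltration_ker_evalₐ I).eq_pow (hJ.map _) (fun n => ?_) (fun n => ?_)⟩
  · calc J.map (algebraMap R _) ^ n = (J ^ n).map (algebraMap R _) := (Ideal.map_pow _ _ _).symm
      _ ≤ (I ^ n).map (algebraMap R _) := Ideal.map_mono (Ideal.pow_right_mono hJI n)
      _ ≤ RingHom.ker (evalₐ I n) := map_pow_le_ker_evalₐ I n
  · calc RingHom.ker (evalₐ I n)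
      _ = (I ^ n).map (algebraMap R _) ⊔ RingHom.ker (evalₐ I (n + 1)) :=
        ker_evalₐ_eq_map_sup I n.le_succ
      _ ≤ (J ^ n ⊔ I ^ (n + 1)).map (algebraMap R _) ⊔ RingHom.ker (evalₐ I (n + 1)) :=
        sup_le_sup_right (Ideal.map_mono (pow_le_sup_pow_succ hJI hIJ n)) _
      _ = J.map (algebraMap R _) ^ n ⊔ RingHom.ker (evalₐ I (n + 1)) := by
        rw [Ideal.map_sup, Ideal.map_pow, sup_assoc, sup_eq_right.mpr (map_pow_le_ker_evalₐ I _)]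

theorem isNoetherianRing_adicCompletion_of_fg_cotangentIdeal [IsNoetherianRing (R ⧸ I)]
    (h : I.cotangentIdeal.FG) : IsNoetherianRing (AdicCompletion I R) := by
  obtain ⟨J, hJ, hker⟩ := exists_fg_ker_evalₐ_eq_pow I h
  have : IsAdicComplete J (AdicCompletion I R) := by
    rw [isAdicComplete_iff_isCompleteFiltration, ← funext hker]
    exact isCompleteFiltration_ker_evalₐ I
  have e : (AdicCompletion I R ⧸ J) ≃+* R ⧸ I :=
    (Ideal.quotEquivOfEq ((pow_one J).symm.trans (hker 1).symm)).trans <|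
      (RingHom.quotientKerEquivOfSurjective (surjective_evalₐ I 1)).trans <|
        Ideal.quotEquivOfEq (pow_one I)
  have : IsNoetherianRing (AdicCompletion I R ⧸ J) := isNoetherianRing_of_ringEquiv _ e.symm
  exact isNoetherianRing_of_isAdicComplete hJ

end AdicCompletion

theorem stmt13_general {R : Type*} [CommRing R] (I : Ideal R) :
    IsNoetherianRing (AdicCompletion I R) ↔
      IsNoetherianRing (R ⧸ I) ∧ Module.Finite (R ⧸ I) I.Cotangent := by
  rw [finite_cotangent_iff_fg_cotangentIdeal]
  refine ⟨fun _ => ⟨?_, fg_cotangentIdeal_of_isNoetherianRing_adicCompletion I⟩,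
    fun ⟨_, h⟩ => isNoetherianRing_adicCompletion_of_fg_cotangentIdeal I h⟩
  exact isNoetherianRing_of_surjective _ _ (evalOneₐ I).toRingHom (evalOneₐ_surjective I)

/-- for a commutative local ring `R` with maximal ideal `m` and residue field
`k`, the `m`-adic completion of `R` is Noetherian if and only if the `k`-vector space `m/m²`
is finite dimensional, i.e. if and only if `R` has finite embedding dimension. -/
theorem stmt13 (R : Type*) [CommRing R] [IsLocalRing R] :
    IsNoetherianRing (AdicCompletion (IsLocalRing.maximalIdeal R) R) ↔
      FiniteDimensional (IsLocalRing.ResidueField R) (IsLocalRing.CotangentSpace R) := by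
  exact (stmt13_general (IsLocalRing.maximalIdeal R)).trans <| and_iff_right <|
    inferInstanceAs (IsNoetherianRing (IsLocalRing.ResidueField R))
end
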